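/- arXiv:1706.09198 — 2 statements merged into one kernel-verified Lean document; each statement's English description precedes it below -/
import Mathlib

section
/- Let q ≥ 2 be an even integer and let (f_n) and (g_n) be sequences in L²(ℝ₊^q) with each g_n symmetric and sup_n ‖f_n‖ < ∞. If ⟨f_n, g_n⟩ → 0 and ‖g_n ⌢_{q/2} g_n − g_n‖ → 0 as n → ∞, then ⟨f_n ⌢_{q/2} g_n, g_n⟩ → 0 as n → ∞. -/
open MeasureTheory Filter Topology

noncomputable section

/-- The positive orthant `ℝ₊ⁿ` inside `ℝⁿ`. -/
def posOrthant (n : ℕ) : Set (Fin n → ℝ) := {x | ∀ i, 0 ≤ x i}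

/-- Lebesgue measure restricted to the positive orthant; the measure underlying `L²(ℝ₊ⁿ)`. -/
def μpos (n : ℕ) : MeasureTheory.Measure (Fin n → ℝ) :=
  MeasureTheory.volume.restrict (posOrthant n)

/-- Total extension of a finite tuple, giving the junk value `0` out of range. -/
def pad {k : ℕ} (t : Fin k → ℝ) (i : ℕ) : ℝ := if h : i < k then t ⟨i, h⟩ else 0

/-- The `L²` inner product `⟨f, g⟩ = ∫ f ⬝ conj g` over the positive orthant. -/
def L2inner (n : ℕ) (f g : (Fin n → ℝ) → ℂ) : ℂ :=
  ∫ x, f x * (starRingEnd ℂ) (g x) ∂(μpos n)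

/-- The `L²` norm over the positive orthant. -/
def L2norm (n : ℕ) (f : (Fin n → ℝ) → ℂ) : ℝ :=
  Real.sqrt (∫ x, ‖f x‖ ^ 2 ∂(μpos n))

/-- The adjoint `f*(t₁,…,tₙ) = conj (f (tₙ,…,t₁))`. -/
def adjF (n : ℕ) (f : (Fin n → ℝ) → ℂ) : (Fin n → ℝ) → ℂ :=
  fun t => (starRingEnd ℂ) (f fun i => t i.rev)

/-- `f` is symmetric when `f = f*` a.e. on the positive orthant. -/
def IsSymmFn (n : ℕ) (f : (Fin n → ℝ) → ℂ) : Prop :=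
  ∀ᵐ t ∂(μpos n), f t = adjF n f t

/-- Reindexing a multivariate function along an equality of dimensions. -/
def reindex {a b : ℕ} (h : a = b) (F : (Fin a → ℝ) → ℂ) : (Fin b → ℝ) → ℂ :=
  fun t => F fun j => t (Fin.cast h j)

/-- The integrand (in the `s`-variables) of the `p`-th arc contraction
`(f ⌢_p g)(t₁,…,t_{m+n-2p}) = ∫ f(t₁,…,t_{m-p},s_p,…,s₁) g(s₁,…,s_p,t_{m-p+1},…,t_{m+n-2p}) ds`. -/
def arcKer (m n p : ℕ) (f : (Fin m → ℝ) → ℂ) (g : (Fin n → ℝ) → ℂ)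
    (t : Fin (m + n - 2 * p) → ℝ) (s : Fin p → ℝ) : ℂ :=
  f (fun j => if (j : ℕ) < m - p then pad t j else pad s (m - 1 - (j : ℕ))) *
  g (fun j => if (j : ℕ) < p then pad s j else pad t (m + (j : ℕ) - 2 * p))

/-- The `p`-th arc contraction `f ⌢_p g`. -/
def arc (m n p : ℕ) (f : (Fin m → ℝ) → ℂ) (g : (Fin n → ℝ) → ℂ) :
    (Fin (m + n - 2 * p) → ℝ) → ℂ :=
  fun t => ∫ s in posOrthant p, arcKer m n p f g t s

/-- The integrand of the star contraction of index `(p, p-1)`: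
`(f ⋆_p^{p-1} g)(t₁,…,t_{m+n-2p+1})
  = ∫ f(t₁,…,t_{m-p},t_{m-p+1},s_{p-1},…,s₁) g(s₁,…,s_{p-1},t_{m-p+1},…,t_{m+n-2p+1}) ds`. -/
def starKer (m n p : ℕ) (f : (Fin m → ℝ) → ℂ) (g : (Fin n → ℝ) → ℂ)
    (t : Fin (m + n + 1 - 2 * p) → ℝ) (s : Fin (p - 1) → ℝ) : ℂ :=
  f (fun j => if (j : ℕ) < m - p + 1 then pad t j else pad s (m - 1 - (j : ℕ))) *
  g (fun j => if (j : ℕ) < p - 1 then pad s j else pad t (m + (j : ℕ) + 1 - 2 * p))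

/-- The star contraction `f ⋆_p^{p-1} g` of index `(p, p-1)`. -/
def starC (m n p : ℕ) (f : (Fin m → ℝ) → ℂ) (g : (Fin n → ℝ) → ℂ) :
    (Fin (m + n + 1 - 2 * p) → ℝ) → ℂ :=
  fun t => ∫ s in posOrthant (p - 1), starKer m n p f g t s

/-- The `q/2`-th arc contraction of two functions of `q` (even) variables,
expressed again as a function of `q` variables. -/
def contrHalf (q : ℕ) (f g : (Fin q → ℝ) → ℂ) : (Fin q → ℝ) → ℂ :=
  fun t => ∫ s in posOrthant (q / 2),
    (f fun j => if (j : ℕ) < q - q / 2 then pad t j else pad s (q - 1 - (j : ℕ))) *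
    (g fun j => if (j : ℕ) < q / 2 then pad s j else pad t (q + (j : ℕ) - 2 * (q / 2)))

/-- The full contraction `f ⌢_q g = ∫ f(t₁,…,t_q) g(t_q,…,t₁) dt` of two
functions of `q` variables. -/
def fullContr (q : ℕ) (f g : (Fin q → ℝ) → ℂ) : ℂ :=
  ∫ t in posOrthant q, f t * g fun i => t i.rev

/-- A `q`-dimensional square (cube): a product of `q` intervals of equal length. -/
def IsCube (q : ℕ) (S : Set (Fin q → ℝ)) : Prop :=
  ∃ (a : Fin q → ℝ) (c : ℝ), S = Set.univ.pi fun i => Set.Icc (a i) (a i + c)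

/-- One step of the left-bracketed iterated contraction, keeping track of the dimension. -/
def iterStep (q : ℕ) (acc : (d : ℕ) × ((Fin d → ℝ) → ℂ))
    (pr : ℕ × ((Fin q → ℝ) → ℂ)) : (d : ℕ) × ((Fin d → ℝ) → ℂ) :=
  ⟨acc.1 + q - 2 * pr.1, arc acc.1 q pr.1 acc.2 pr.2⟩

/-- The left-bracketed iterated contraction `(⋯((f₀ ⌢_{r₁} f₁) ⌢_{r₂} f₂)⋯) ⌢_{r_k} f_k`. -/
def iterArc (q : ℕ) (f0 : (Fin q → ℝ) → ℂ) (l : List (ℕ × ((Fin q → ℝ) → ℂ))) :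
    (d : ℕ) × ((Fin d → ℝ) → ℂ) :=
  l.foldl (iterStep q) ⟨q, f0⟩

/-- The value of a (`0`-dimensional, i.e. scalar) iterated contraction. -/
def scalarOf (x : (d : ℕ) × ((Fin d → ℝ) → ℂ)) : ℂ := x.2 fun _ => 0

/-!
Cut the variables of a function into a front block and a back block, reading the back block
backwards. Functions of several variables become kernels on a product space, `f ⌢_p g` becomes the
composition of kernels, and a symmetric function becomes a Hermitian kernel. If `L` is Hermitian,
then composition with `L` on the right is self-adjoint, so
`⟨K ∘ L, H⟩ = ⟨K, H ∘ L⟩ = ⟨K, H⟩ + ⟨K, H ∘ L - H⟩`, and Cauchy–Schwarz bounds the last term.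
-/

open scoped ComplexConjugate

section SquareIntegrable

variable {α β 𝕜 E : Type*} [MeasurableSpace α] [MeasurableSpace β] [RCLike 𝕜]
  [NormedAddCommGroup E] {μ : Measure α} {ν : Measure β}

theorem norm_integral_mul_le_sqrt_mul_sqrt {f g : α → 𝕜} (hf : MemLp f 2 μ) (hg : MemLp g 2 μ) :
    ‖∫ x, f x * g x ∂μ‖ ≤ √(∫ x, ‖f x‖ ^ 2 ∂μ) * √(∫ x, ‖g x‖ ^ 2 ∂μ) := by
  have hölder := integral_mul_norm_le_Lp_mul_Lq Real.HolderConjugate.two_two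
    (by simpa using hf) (by simpa using hg)
  calc ‖∫ x, f x * g x ∂μ‖ ≤ ∫ x, ‖f x‖ * ‖g x‖ ∂μ := by
        simpa only [norm_mul] using norm_integral_le_integral_norm fun x => f x * g x
    _ ≤ _ := by simpa [Real.sqrt_eq_rpow] using hölder

theorem memLp_two_sqrt_of_integrable {f : α → ℝ} (hf : Integrable f μ) (hf₀ : 0 ≤ f) :
    MemLp (fun x => √(f x)) 2 μ := by
  have hmeas := Real.continuous_sqrt.comp_aestronglyMeasurable hf.aestronglyMeasurable
  exact (memLp_two_iff_integrable_sq hmeas).2 (by simpa [Real.sq_sqrt (hf₀ _)] using hf)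

theorem memLp_two_prodMk_left_ae [SFinite μ] [SFinite ν] {F : α × β → E}
    (hF : MemLp F 2 (μ.prod ν)) : ∀ᵐ x ∂μ, MemLp (fun y => F (x, y)) 2 ν := by
  have hsq := (memLp_two_iff_integrable_sq_norm hF.1).1 hF
  filter_upwards [hF.1.prodMk_left, hsq.prod_right_ae] with x hx hxsq
  exact (memLp_two_iff_integrable_sq_norm hx).2 hxsq

theorem memLp_two_prodMk_right_ae [SFinite μ] [SFinite ν] {F : α × β → E}
    (hF : MemLp F 2 (μ.prod ν)) : ∀ᵐ y ∂ν, MemLp (fun x => F (x, y)) 2 μ :=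
  memLp_two_prodMk_left_ae (hF.comp_measurePreserving Measure.measurePreserving_swap)

theorem memLp_two_mul_prod {f : α → 𝕜} {g : β → 𝕜}
    (hf : MemLp f 2 μ) (hg : MemLp g 2 ν) :
    MemLp (fun z : α × β => f z.1 * g z.2) 2 (μ.prod ν) := by
  refine (memLp_two_iff_integrable_sq_norm (hf.1.comp_fst.mul hg.1.comp_snd)).2 ?_
  simpa only [Pi.mul_apply, norm_mul, mul_pow] using
    ((memLp_two_iff_integrable_sq_norm hf.1).1 hf).mul_prod
      ((memLp_two_iff_integrable_sq_norm hg.1).1 hg)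

end SquareIntegrable

section Kernel

variable {X Y Z 𝕜 : Type*} [MeasurableSpace X] [MeasurableSpace Y] [MeasurableSpace Z] [RCLike 𝕜]
  {μ : Measure X} {ν : Measure Y} {κ : Measure Z}

/-- Composition of the integral kernels `F` and `G`, the continuous analogue of the product of
matrices; it is the kernel of the composed integral operators. Its value is `0` at the points where
the integrand is not integrable. -/
def kernelComp (ν : Measure Y) (F : X × Y → 𝕜) (G : Y × Z → 𝕜) (z : X × Z) : 𝕜 :=
  ∫ y, F (z.1, y) * G (y, z.2) ∂ν

/-- The adjoint kernel, the continuous analogue of the conjugate transpose of a matrix. -/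
def kernelAdjoint (F : X × Y → 𝕜) (z : Y × X) : 𝕜 := conj (F z.swap)

theorem kernelComp_congr_right [SFinite ν] [SFinite κ] (F : X × Y → 𝕜) {G G' : Y × Z → 𝕜}
    (hG : G =ᵐ[ν.prod κ] G') : kernelComp ν F G =ᵐ[μ.prod κ] kernelComp ν F G' := by
  have hslice : ∀ᵐ z ∂κ, ∀ᵐ y ∂ν, G (y, z) = G' (y, z) :=
    Measure.ae_ae_of_ae_prod (Measure.measurePreserving_swap.quasiMeasurePreserving.ae hG)
  filter_upwards [Measure.quasiMeasurePreserving_snd.ae hslice] with z hz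
  exact integral_congr_ae (hz.mono fun y hy => by simp only [hy])

variable [SFinite μ] [SFinite ν] [SFinite κ]

theorem aestronglyMeasurable_kernelComp_integrand {F : X × Y → 𝕜} {G : Y × Z → 𝕜}
    (hF : AEStronglyMeasurable F (μ.prod ν)) (hG : AEStronglyMeasurable G (ν.prod κ)) :
    AEStronglyMeasurable (fun w : (X × Z) × Y => F (w.1.1, w.2) * G (w.2, w.1.2))
      ((μ.prod κ).prod ν) := by
  have hleft : Measure.QuasiMeasurePreserving (fun w : (X × Z) × Y => (w.1.1, w.2))
      ((μ.prod κ).prod ν) (μ.prod ν) :=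
    QuasiMeasurePreserving.prodMap Measure.quasiMeasurePreserving_fst (.id ν)
  have hright : Measure.QuasiMeasurePreserving (fun w : (X × Z) × Y => (w.2, w.1.2))
      ((μ.prod κ).prod ν) (ν.prod κ) :=
    Measure.measurePreserving_swap.quasiMeasurePreserving.comp
      (QuasiMeasurePreserving.prodMap Measure.quasiMeasurePreserving_snd (.id ν))
  exact (hF.comp_quasiMeasurePreserving hleft).mul (hG.comp_quasiMeasurePreserving hright)

theorem memLp_two_kernelComp {F : X × Y → 𝕜} {G : Y × Z → 𝕜}
    (hF : MemLp F 2 (μ.prod ν)) (hG : MemLp G 2 (ν.prod κ)) :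
    MemLp (kernelComp ν F G) 2 (μ.prod κ) := by
  have hrow : MemLp (fun x => √(∫ y, ‖F (x, y)‖ ^ 2 ∂ν)) 2 μ :=
    memLp_two_sqrt_of_integrable ((memLp_two_iff_integrable_sq_norm hF.1).1 hF).integral_prod_left
      fun x => by positivity
  have hcol : MemLp (fun z => √(∫ y, ‖G (y, z)‖ ^ 2 ∂ν)) 2 κ :=
    memLp_two_sqrt_of_integrable ((memLp_two_iff_integrable_sq_norm hG.1).1 hG).integral_prod_right
      fun z => by positivity
  refine (memLp_two_mul_prod hrow hcol).mono
    (aestronglyMeasurable_kernelComp_integrand hF.1 hG.1).integral_prod_right' ?_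
  filter_upwards [Measure.quasiMeasurePreserving_fst.ae (memLp_two_prodMk_left_ae hF),
    Measure.quasiMeasurePreserving_snd.ae (memLp_two_prodMk_right_ae hG)] with z hFz hGz
  exact (norm_integral_mul_le_sqrt_mul_sqrt hFz hGz).trans (le_abs_self _)

theorem integrable_kernelComp_integrand_mul {F : X × Y → 𝕜} {G : Y × Z → 𝕜} {H : X × Z → 𝕜}
    (hF : MemLp F 2 (μ.prod ν)) (hG : MemLp G 2 (ν.prod κ)) (hH : MemLp H 2 (μ.prod κ)) :
    Integrable (fun w : (X × Z) × Y => F (w.1.1, w.2) * G (w.2, w.1.2) * H w.1)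
      ((μ.prod κ).prod ν) := by
  have hmeas := (aestronglyMeasurable_kernelComp_integrand hF.1 hG.1).mul hH.1.comp_fst
  refine (integrable_prod_iff hmeas).2 ⟨?_, ?_⟩
  · filter_upwards [Measure.quasiMeasurePreserving_fst.ae (memLp_two_prodMk_left_ae hF),
      Measure.quasiMeasurePreserving_snd.ae (memLp_two_prodMk_right_ae hG)] with z hFz hGz
    exact (hFz.integrable_mul hGz).mul_const (H z)
  · have habs := (memLp_two_kernelComp hF.norm hG.norm).integrable_mul hH.norm
    simp only [Pi.mul_apply, norm_mul, integral_mul_const]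
    exact habs

theorem integral_prod_prod_right_comm {E : Type*} [NormedAddCommGroup E] [NormedSpace ℝ E]
    {Φ : (X × Z) × Y → E} (hΦ : Integrable Φ ((μ.prod κ).prod ν)) :
    ∫ z, ∫ y, Φ (z, y) ∂ν ∂(μ.prod κ) = ∫ w, ∫ z, Φ ((w.1, z), w.2) ∂κ ∂(μ.prod ν) := by
  let T : (X × Y) × Z ≃ᵐ (X × Z) × Y :=
    MeasurableEquiv.prodAssoc.trans
      (((MeasurableEquiv.refl X).prodCongr MeasurableEquiv.prodComm).trans
        MeasurableEquiv.prodAssoc.symm)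
  have hT : MeasurePreserving T ((μ.prod ν).prod κ) ((μ.prod κ).prod ν) :=
    (((measurePreserving_prodAssoc μ κ ν).symm _).comp
      ((MeasurePreserving.id μ).prod Measure.measurePreserving_swap)).comp
      (measurePreserving_prodAssoc μ ν κ)
  calc ∫ z, ∫ y, Φ (z, y) ∂ν ∂(μ.prod κ) = ∫ w, Φ w ∂((μ.prod κ).prod ν) :=
        (integral_prod _ hΦ).symm
    _ = ∫ w, Φ (T w) ∂((μ.prod ν).prod κ) := (hT.integral_comp' Φ).symm
    _ = ∫ w, ∫ z, Φ ((w.1, z), w.2) ∂κ ∂(μ.prod ν) :=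
        integral_prod _ ((hT.integrable_comp_emb T.measurableEmbedding).2 hΦ)

theorem integral_kernelComp_mul_conj {F : X × Y → 𝕜} {G : Y × Z → 𝕜} {H : X × Z → 𝕜}
    (hF : MemLp F 2 (μ.prod ν)) (hG : MemLp G 2 (ν.prod κ)) (hH : MemLp H 2 (μ.prod κ)) :
    ∫ z, kernelComp ν F G z * conj (H z) ∂(μ.prod κ) =
      ∫ w, F w * conj (kernelComp κ H (kernelAdjoint G) w) ∂(μ.prod ν) := by
  calc ∫ z, kernelComp ν F G z * conj (H z) ∂(μ.prod κ)
      = ∫ z, ∫ y, F (z.1, y) * G (y, z.2) * conj (H z) ∂ν ∂(μ.prod κ) := by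
        simp only [kernelComp, integral_mul_const]
    _ = ∫ w, ∫ z, F w * G (w.2, z) * conj (H (w.1, z)) ∂κ ∂(μ.prod ν) :=
        integral_prod_prod_right_comm (integrable_kernelComp_integrand_mul hF hG hH.star)
    _ = ∫ w, F w * conj (kernelComp κ H (kernelAdjoint G) w) ∂(μ.prod ν) := by
        simp only [kernelComp, kernelAdjoint, ← integral_conj, map_mul, RCLike.conj_conj,
          Prod.swap_prod_mk, mul_assoc, integral_const_mul, mul_comm (conj (H _))]

theorem integral_kernelComp_mul_conj_of_hermitian {K H : X × Y → 𝕜} {L : Y × Y → 𝕜}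
    (hK : MemLp K 2 (μ.prod ν)) (hH : MemLp H 2 (μ.prod ν)) (hL : MemLp L 2 (ν.prod ν))
    (hLherm : L =ᵐ[ν.prod ν] kernelAdjoint L) :
    ∫ z, kernelComp ν K L z * conj (H z) ∂(μ.prod ν) =
      ∫ z, K z * conj (kernelComp ν H L z) ∂(μ.prod ν) := by
  rw [integral_kernelComp_mul_conj hK hL hH]
  refine integral_congr_ae ?_
  filter_upwards [kernelComp_congr_right H hLherm] with z hz
  rw [hz]

theorem norm_integral_kernelComp_mul_conj_le {K H : X × Y → 𝕜} {L : Y × Y → 𝕜}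
    (hK : MemLp K 2 (μ.prod ν)) (hH : MemLp H 2 (μ.prod ν)) (hL : MemLp L 2 (ν.prod ν))
    (hLherm : L =ᵐ[ν.prod ν] kernelAdjoint L) :
    ‖∫ z, kernelComp ν K L z * conj (H z) ∂(μ.prod ν)‖ ≤
      ‖∫ z, K z * conj (H z) ∂(μ.prod ν)‖ +
        √(∫ z, ‖K z‖ ^ 2 ∂(μ.prod ν)) *
          √(∫ z, ‖kernelComp ν H L z - H z‖ ^ 2 ∂(μ.prod ν)) := by
  have hdefect : MemLp (fun z => conj (kernelComp ν H L z - H z)) 2 (μ.prod ν) :=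
    ((memLp_two_kernelComp hH hL).sub hH).star
  have hsplit : ∫ z, kernelComp ν K L z * conj (H z) ∂(μ.prod ν) =
      ∫ z, K z * conj (H z) ∂(μ.prod ν) +
        ∫ z, K z * conj (kernelComp ν H L z - H z) ∂(μ.prod ν) := by
    calc ∫ z, kernelComp ν K L z * conj (H z) ∂(μ.prod ν)
        = ∫ z, K z * conj (kernelComp ν H L z) ∂(μ.prod ν) :=
          integral_kernelComp_mul_conj_of_hermitian hK hH hL hLherm
      _ = ∫ z, (K z * conj (H z) + K z * conj (kernelComp ν H L z - H z)) ∂(μ.prod ν) := by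
          simp only [← mul_add, ← map_add, add_sub_cancel]
      _ = _ := integral_add (hK.integrable_mul hH.star) (hK.integrable_mul hdefect)
  have hcs := norm_integral_mul_le_sqrt_mul_sqrt hK hdefect
  simp only [RCLike.norm_conj] at hcs
  rw [hsplit]
  exact (norm_add_le _ _).trans (by gcongr)

end Kernel

section Orthant

theorem μpos_eq_pi (n : ℕ) :
    μpos n = Measure.pi fun _ : Fin n => (volume : Measure ℝ).restrict (Set.Ici 0) := by
  have hbox : posOrthant n = Set.univ.pi fun _ => Set.Ici 0 := by
    ext x
    simp only [posOrthant, Set.mem_pi, Set.mem_ofPred_eq, Set.mem_univ, true_imp_iff, Set.mem_Ici]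
  rw [μpos, hbox, ← Measure.restrict_pi_pi]
  rfl

instance (n : ℕ) : SigmaFinite (μpos n) := by
  rw [μpos_eq_pi]
  infer_instance

/-- The map sending `(x, y)` to the concatenation of `x` with the reversal of `y`. The reversal
turns arc contractions into compositions of kernels. -/
def appendRev (k p : ℕ) : (Fin k → ℝ) × (Fin p → ℝ) ≃ᵐ (Fin (k + p) → ℝ) :=
  (MeasurableEquiv.sumPiEquivProdPi fun _ : Fin k ⊕ Fin p => ℝ).symm.trans
    (MeasurableEquiv.piCongrLeft (fun _ => ℝ)
      ((Equiv.sumCongr (Equiv.refl _) Fin.revPerm).trans finSumFinEquiv))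

variable {k l p : ℕ}

@[simp]
theorem appendRev_castAdd (z : (Fin k → ℝ) × (Fin p → ℝ)) (i : Fin k) :
    appendRev k p z (Fin.castAdd p i) = z.1 i :=
  Equiv.piCongrLeft_apply_apply (fun _ => ℝ)
    ((Equiv.sumCongr (Equiv.refl _) Fin.revPerm).trans finSumFinEquiv) _ (Sum.inl i)

@[simp]
theorem appendRev_natAdd (z : (Fin k → ℝ) × (Fin p → ℝ)) (i : Fin p) :
    appendRev k p z (Fin.natAdd k i) = z.2 i.rev := by
  obtain ⟨j, rfl⟩ := Fin.rev_surjective i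
  rw [Fin.rev_rev]
  exact Equiv.piCongrLeft_apply_apply (fun _ => ℝ)
    ((Equiv.sumCongr (Equiv.refl _) Fin.revPerm).trans finSumFinEquiv) _ (Sum.inr j)

theorem measurePreserving_appendRev (k p : ℕ) :
    MeasurePreserving (appendRev k p) ((μpos k).prod (μpos p)) (μpos (k + p)) := by
  simp only [μpos_eq_pi]
  exact (measurePreserving_piCongrLeft (fun _ => (volume : Measure ℝ).restrict (Set.Ici 0)) _).comp
    (measurePreserving_sumPiEquivProdPi_symm
      fun _ : Fin k ⊕ Fin p => (volume : Measure ℝ).restrict (Set.Ici 0))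

theorem appendRev_comp_rev (z : (Fin p → ℝ) × (Fin p → ℝ)) :
    (fun i => appendRev p p z i.rev) = appendRev p p z.swap := by
  funext i
  refine Fin.addCases (fun j => ?_) (fun j => ?_) i
  · rw [Fin.rev_castAdd, ← Fin.natAdd_eq_addNat, appendRev_natAdd, appendRev_castAdd, Fin.rev_rev,
      Prod.fst_swap]
  · rw [Fin.natAdd_eq_addNat, Fin.rev_addNat, appendRev_castAdd, ← Fin.natAdd_eq_addNat,
      appendRev_natAdd, Prod.snd_swap]

theorem pad_of_lt (t : Fin k → ℝ) {i : ℕ} (hi : i < k) : pad t i = t ⟨i, hi⟩ := dif_pos hi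

theorem pad_cast (h : k = l) (t : Fin l → ℝ) (i : ℕ) :
    pad (fun j => t (Fin.cast h j)) i = pad t i := by
  subst h
  rfl

theorem arcKer_appendRev (f : (Fin (k + p) → ℝ) → ℂ) (g : (Fin (p + l) → ℝ) → ℂ)
    (h : k + p + (p + l) - 2 * p = k + l) (z : (Fin k → ℝ) × (Fin l → ℝ)) (s : Fin p → ℝ) :
    arcKer (k + p) (p + l) p f g (fun j => appendRev k l z (Fin.cast h j)) s =
      f (appendRev k p (z.1, s)) * g (appendRev p l (s, z.2)) := by
  unfold arcKer
  congr 2 <;> funext j <;> refine Fin.addCases (fun i => ?_) (fun i => ?_) j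
  · have hpad : pad (appendRev k l z) i = z.1 i :=
      (pad_of_lt _ (by omega)).trans (appendRev_castAdd z i)
    simp [pad_cast, hpad]
  · have hpad : pad s (k + p - 1 - (k + i)) = s i.rev := by
      rw [show k + p - 1 - (k + i) = i.rev by rw [Fin.val_rev]; omega]
      exact pad_of_lt s i.rev.isLt
    simp [hpad]
  · simp [pad_of_lt]
  · have hpad : pad (appendRev k l z) (k + p + (p + i) - 2 * p) = z.2 i.rev := by
      rw [show k + p + (p + i) - 2 * p = k + i by omega]
      exact (pad_of_lt _ (by omega)).trans (appendRev_natAdd z i)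
    simp [pad_cast, hpad]

theorem reindex_arc_appendRev (f : (Fin (k + p) → ℝ) → ℂ) (g : (Fin (p + l) → ℝ) → ℂ)
    (h : k + p + (p + l) - 2 * p = k + l) (z : (Fin k → ℝ) × (Fin l → ℝ)) :
    reindex h (arc (k + p) (p + l) p f g) (appendRev k l z) =
      kernelComp (μpos p) (f ∘ appendRev k p) (g ∘ appendRev p l) z :=
  integral_congr_ae (.of_forall (arcKer_appendRev f g h z))

theorem comp_appendRev_ae_eq_kernelAdjoint {g : (Fin (p + p) → ℝ) → ℂ}
    (hg : IsSymmFn (p + p) g) :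
    g ∘ appendRev p p =ᵐ[(μpos p).prod (μpos p)] kernelAdjoint (g ∘ appendRev p p) := by
  filter_upwards [(measurePreserving_appendRev p p).quasiMeasurePreserving.ae hg] with z hz
  simpa only [adjF, appendRev_comp_rev, kernelAdjoint, Function.comp_apply] using hz

theorem L2inner_eq_integral_appendRev (f g : (Fin (k + p) → ℝ) → ℂ) :
    L2inner (k + p) f g =
      ∫ z, f (appendRev k p z) * conj (g (appendRev k p z)) ∂((μpos k).prod (μpos p)) :=
  ((measurePreserving_appendRev k p).integral_comp' fun x => f x * conj (g x)).symm

theorem L2norm_eq_sqrt_integral_appendRev (f : (Fin (k + p) → ℝ) → ℂ) :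
    L2norm (k + p) f = √(∫ z, ‖f (appendRev k p z)‖ ^ 2 ∂((μpos k).prod (μpos p))) :=
  congrArg Real.sqrt
    ((measurePreserving_appendRev k p).integral_comp' fun x => ‖f x‖ ^ 2).symm

theorem norm_L2inner_arc_le {m n : ℕ} (hpm : p ≤ m) (hn : n = 2 * p)
    {f h : (Fin m → ℝ) → ℂ} {g : (Fin n → ℝ) → ℂ} (hf : MemLp f 2 (μpos m))
    (hh : MemLp h 2 (μpos m)) (hg : MemLp g 2 (μpos n)) (hgs : IsSymmFn n g) :
    ‖L2inner m (reindex (show m + n - 2 * p = m by omega) (arc m n p f g)) h‖ ≤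
      ‖L2inner m f h‖ + L2norm m f *
        L2norm m (fun t =>
          reindex (show m + n - 2 * p = m by omega) (arc m n p h g) t - h t) := by
  obtain ⟨k, rfl⟩ := Nat.exists_eq_add_of_le' hpm
  obtain rfl : n = p + p := hn.trans (two_mul p)
  have hcomp (k : ℕ) := measurePreserving_appendRev k p
  simpa only [L2inner_eq_integral_appendRev, L2norm_eq_sqrt_integral_appendRev,
    reindex_arc_appendRev, Function.comp_apply] using
    norm_integral_kernelComp_mul_conj_le (hf.comp_measurePreserving (hcomp k))
      (hh.comp_measurePreserving (hcomp k)) (hg.comp_measurePreserving (hcomp p))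
      (comp_appendRev_ae_eq_kernelAdjoint hgs)

end Orthant

theorem arc_half_contraction_inner_tendsto_zero_general {ι : Type*} {l : Filter ι} {m n p : ℕ}
    (hpm : p ≤ m) (hn : n = 2 * p) {f h : ι → (Fin m → ℝ) → ℂ} {g : ι → (Fin n → ℝ) → ℂ}
    (hf : ∀ i, MemLp (f i) 2 (μpos m)) (hh : ∀ i, MemLp (h i) 2 (μpos m))
    (hg : ∀ i, MemLp (g i) 2 (μpos n)) (hgs : ∀ i, IsSymmFn n (g i))
    (hbdd : l.IsBoundedUnder (· ≤ ·) fun i => L2norm m (f i))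
    (hinner : Tendsto (fun i => L2inner m (f i) (h i)) l (𝓝 0))
    (hfix : Tendsto (fun i => L2norm m (fun t =>
        reindex (show m + n - 2 * p = m by omega) (arc m n p (h i) (g i)) t - h i t)) l (𝓝 0)) :
    Tendsto (fun i =>
        L2inner m (reindex (show m + n - 2 * p = m by omega) (arc m n p (f i) (g i))) (h i))
      l (𝓝 0) := by
  have hbdd' : l.IsBoundedUnder (· ≤ ·) (norm ∘ fun i => L2norm m (f i)) := by
    simpa only [Function.comp_def, L2norm, Real.norm_of_nonneg (Real.sqrt_nonneg _)] using hbdd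
  have hlim := hinner.norm.add (isBoundedUnder_le_mul_tendsto_zero hbdd' hfix)
  rw [norm_zero, add_zero] at hlim
  exact squeeze_zero_norm (fun i => norm_L2inner_arc_le hpm hn (hf i) (hh i) (hg i) (hgs i)) hlim

/-- if `sup_n ‖f_n‖ < ∞`, `⟨f_n, g_n⟩ → 0` and `‖g_n ⌢_{q/2} g_n - g_n‖ → 0`,
then `⟨f_n ⌢_{q/2} g_n, g_n⟩ → 0`. -/
theorem arc_half_contraction_inner_tendsto_zero (q : ℕ) (hq2 : 2 ≤ q) (hqe : q % 2 = 0)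
    (f g : ℕ → (Fin q → ℝ) → ℂ)
    (hf : ∀ n, MeasureTheory.MemLp (f n) 2 (μpos q))
    (hg : ∀ n, MeasureTheory.MemLp (g n) 2 (μpos q))
    (hgs : ∀ n, IsSymmFn q (g n))
    (C : ℝ) (hC : ∀ n, L2norm q (f n) ≤ C)
    (h1 : Filter.Tendsto (fun n => L2inner q (f n) (g n)) Filter.atTop (nhds 0))
    (h2 : Filter.Tendsto (fun n => L2norm q (fun t =>
        reindex (show q + q - 2 * (q / 2) = q by omega) (arc q q (q / 2) (g n) (g n)) t
          - g n t)) Filter.atTop (nhds 0)) :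
    Filter.Tendsto (fun n => L2inner q
        (reindex (show q + q - 2 * (q / 2) = q by omega) (arc q q (q / 2) (f n) (g n))) (g n))
      Filter.atTop (nhds 0) :=
  arc_half_contraction_inner_tendsto_zero_general (by omega) (by omega) hf hg hg hgs
    (isBoundedUnder_of ⟨C, hC⟩) h1 h2

end
end

section
/- Let q ≥ 2 be an integer and let f, g ∈ L²(ℝ₊^q) be such that |f| ≤ M_f and |g| ≤ M_g almost everywhere, f vanishes almost everywhere outside a q-dimensional square S_f ⊂ ℝ₊^q, and g vanishes almost everywhere outside a q-dimensional square S_g ⊂ ℝ₊^q. Then for every integer 1 ≤ r ≤ q, the star contraction f ⋆_r^{r−1} g belongs to L²(ℝ₊^{2q−2r+1}) and ‖f ⋆_r^{r−1} g‖_{L²(ℝ₊^{2q−2r+1})} ≤ ( M_f M_g (μ(S_f) μ(S_g))^{(q−1)/(2q)} ‖f‖ ‖g‖ )^{1/2}. -/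
open MeasureTheory Filter Topology

noncomputable section

/-! On fibers over the shared variable `t`, the star contraction is a Hilbert–Schmidt composition of
kernels, so Cauchy–Schwarz gives `‖f ⋆ g‖² ≤ ∫ ‖f_t‖² ‖g_t‖² dt`, where `f_t` and `g_t` are the
slices of `f` and `g` at `t`. A slice of a function bounded by `M` and supported in a cube `S` of
dimension `m` has norm at most `M μ(S)^((m-1)/(2m))`. Bounding either factor in this way gives two
one-sided estimates, and the theorem is their geometric mean. -/

open scoped ENNReal

section EuclideanNorm

variable {α β E : Type*} [MeasurableSpace α] [MeasurableSpace β] {μ : Measure α} {ν : Measure β}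

lemma eLpNorm_two_sq [ENorm E] (f : α → E) : eLpNorm f 2 μ ^ 2 = ∫⁻ x, ‖f x‖ₑ ^ 2 ∂μ := by
  simpa using eLpNorm_nnreal_pow_eq_lintegral (f := f) (μ := μ) (two_ne_zero (α := NNReal))

lemma aemeasurable_eLpNorm_two_sq_slice [NormedAddCommGroup E] [SFinite ν]
    {f : α × β → E} (hf : AEStronglyMeasurable f (μ.prod ν)) :
    AEMeasurable (fun x ↦ eLpNorm (fun y ↦ f (x, y)) 2 ν ^ 2) μ := by
  simp only [eLpNorm_two_sq]
  exact (hf.enorm.pow_const 2).lintegral_prod_right'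

lemma eLpNorm_two_sq_prod [NormedAddCommGroup E] [SFinite ν] {f : α × β → E}
    (hf : AEStronglyMeasurable f (μ.prod ν)) :
    eLpNorm f 2 (μ.prod ν) ^ 2 = ∫⁻ x, eLpNorm (fun y ↦ f (x, y)) 2 ν ^ 2 ∂μ := by
  simp only [eLpNorm_two_sq]
  exact lintegral_prod _ (hf.enorm.pow_const 2)

lemma enorm_integral_mul_le_eLpNorm_two [NormedRing E] [NormedSpace ℝ E] {f g : α → E}
    (hf : AEStronglyMeasurable f μ) (hg : AEStronglyMeasurable g μ) :
    ‖∫ x, f x * g x ∂μ‖ₑ ≤ eLpNorm f 2 μ * eLpNorm g 2 μ :=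
  calc ‖∫ x, f x * g x ∂μ‖ₑ
      ≤ eLpNorm (f • g) 1 μ := by
        rw [eLpNorm_one_eq_lintegral_enorm]
        exact enorm_integral_le_lintegral_enorm _
    _ ≤ eLpNorm f 2 μ * eLpNorm g 2 μ := eLpNorm_smul_le_mul_eLpNorm hg hf

lemma eLpNorm_le_of_ae_bound_of_ae_eq_zero [NormedAddCommGroup E] {f : α → E} {M : ℝ} {s : Set α}
    (hM : ∀ᵐ x ∂μ, ‖f x‖ ≤ M) (hs : ∀ᵐ x ∂μ, x ∉ s → f x = 0) (p : ℝ≥0∞) :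
    eLpNorm f p μ ≤ ‖M‖ₑ * μ s ^ (1 / p.toReal) := by
  refine (eLpNorm_mono_ae_real ?_).trans (eLpNorm_indicator_const_le M p)
  filter_upwards [hM, hs] with x hMx hsx
  by_cases hx : x ∈ s
  · simpa [hx] using hMx
  · simp [hx, hsx hx]

end EuclideanNorm

section PartialContraction

variable {T X Y S 𝕜 : Type*} [MeasurableSpace T] [MeasurableSpace X] [MeasurableSpace Y]
  [MeasurableSpace S] [NormedRing 𝕜] [NormedSpace ℝ 𝕜]
  {τ : Measure T} {χ : Measure X} {υ : Measure Y} {σ : Measure S}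
  [SFinite υ] [SFinite σ]

lemma eLpNorm_integral_mul_le {φ : X × S → 𝕜} {ψ : Y × S → 𝕜}
    (hφ : AEStronglyMeasurable φ (χ.prod σ)) (hψ : AEStronglyMeasurable ψ (υ.prod σ)) :
    eLpNorm (fun z : X × Y ↦ ∫ s, φ (z.1, s) * ψ (z.2, s) ∂σ) 2 (χ.prod υ) ≤
      eLpNorm φ 2 (χ.prod σ) * eLpNorm ψ 2 (υ.prod σ) := by
  rw [← ENNReal.pow_le_pow_left_iff two_ne_zero, mul_pow, eLpNorm_two_sq_prod hφ,
    eLpNorm_two_sq_prod hψ, eLpNorm_two_sq,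
    ← lintegral_prod_mul (aemeasurable_eLpNorm_two_sq_slice hφ)
      (aemeasurable_eLpNorm_two_sq_slice hψ)]
  refine lintegral_mono_ae ?_
  filter_upwards [Measure.quasiMeasurePreserving_fst.ae hφ.prodMk_left,
    Measure.quasiMeasurePreserving_snd.ae hψ.prodMk_left] with z hφz hψz
  rw [← mul_pow]
  gcongr
  exact enorm_integral_mul_le_eLpNorm_two hφz hψz

/-- The contraction of two kernels which share the variables `t` and `s`, where `s` is integrated
out and `t` is kept as a parameter. Star contractions are the instances on orthants. -/
def partialContraction (σ : Measure S) (φ : T × X × S → 𝕜) (ψ : T × Y × S → 𝕜)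
    (z : T × X × Y) : 𝕜 :=
  ∫ s, φ (z.1, z.2.1, s) * ψ (z.1, z.2.2, s) ∂σ

variable [SFinite τ] [SFinite χ] {φ : T × X × S → 𝕜} {ψ : T × Y × S → 𝕜}

lemma aestronglyMeasurable_partialContraction
    (hφ : AEStronglyMeasurable φ (τ.prod (χ.prod σ)))
    (hψ : AEStronglyMeasurable ψ (τ.prod (υ.prod σ))) :
    AEStronglyMeasurable (partialContraction σ φ ψ) (τ.prod (χ.prod υ)) := by
  have hassoc := (measurePreserving_prodAssoc τ (χ.prod υ) σ).quasiMeasurePreserving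
  have hφ' := hφ.comp_quasiMeasurePreserving <| (QuasiMeasurePreserving.prodMap (.id τ)
    (QuasiMeasurePreserving.prodMap Measure.quasiMeasurePreserving_fst (.id σ))).comp hassoc
  have hψ' := hψ.comp_quasiMeasurePreserving <| (QuasiMeasurePreserving.prodMap (.id τ)
    (QuasiMeasurePreserving.prodMap Measure.quasiMeasurePreserving_snd (.id σ))).comp hassoc
  exact (hφ'.mul hψ').integral_prod_right'

lemma eLpNorm_partialContraction_sq_le
    (hφ : AEStronglyMeasurable φ (τ.prod (χ.prod σ)))
    (hψ : AEStronglyMeasurable ψ (τ.prod (υ.prod σ))) :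
    eLpNorm (partialContraction σ φ ψ) 2 (τ.prod (χ.prod υ)) ^ 2 ≤
      ∫⁻ t, eLpNorm (fun z ↦ φ (t, z)) 2 (χ.prod σ) ^ 2 *
        eLpNorm (fun z ↦ ψ (t, z)) 2 (υ.prod σ) ^ 2 ∂τ := by
  rw [eLpNorm_two_sq_prod (aestronglyMeasurable_partialContraction hφ hψ)]
  refine lintegral_mono_ae ?_
  filter_upwards [hφ.prodMk_left, hψ.prodMk_left] with t hφt hψt
  rw [← mul_pow]
  exact pow_le_pow_left' (eLpNorm_integral_mul_le hφt hψt) 2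

lemma eLpNorm_partialContraction_le_left {C : ℝ≥0∞}
    (hφ : AEStronglyMeasurable φ (τ.prod (χ.prod σ)))
    (hψ : AEStronglyMeasurable ψ (τ.prod (υ.prod σ)))
    (hC : ∀ᵐ t ∂τ, eLpNorm (fun z ↦ φ (t, z)) 2 (χ.prod σ) ≤ C) :
    eLpNorm (partialContraction σ φ ψ) 2 (τ.prod (χ.prod υ)) ≤
      C * eLpNorm ψ 2 (τ.prod (υ.prod σ)) := by
  rw [← ENNReal.pow_le_pow_left_iff two_ne_zero, mul_pow, eLpNorm_two_sq_prod hψ,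
    ← lintegral_const_mul'' _ (aemeasurable_eLpNorm_two_sq_slice hψ)]
  refine (eLpNorm_partialContraction_sq_le hφ hψ).trans (lintegral_mono_ae ?_)
  filter_upwards [hC] with t ht
  gcongr

lemma eLpNorm_partialContraction_le_right {C : ℝ≥0∞}
    (hφ : AEStronglyMeasurable φ (τ.prod (χ.prod σ)))
    (hψ : AEStronglyMeasurable ψ (τ.prod (υ.prod σ)))
    (hC : ∀ᵐ t ∂τ, eLpNorm (fun z ↦ ψ (t, z)) 2 (υ.prod σ) ≤ C) :
    eLpNorm (partialContraction σ φ ψ) 2 (τ.prod (χ.prod υ)) ≤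
      eLpNorm φ 2 (τ.prod (χ.prod σ)) * C := by
  rw [← ENNReal.pow_le_pow_left_iff two_ne_zero, mul_pow, eLpNorm_two_sq_prod hφ,
    ← lintegral_mul_const'' _ (aemeasurable_eLpNorm_two_sq_slice hφ)]
  refine (eLpNorm_partialContraction_sq_le hφ hψ).trans (lintegral_mono_ae ?_)
  filter_upwards [hC] with t ht
  gcongr

end PartialContraction

section PiGlue

variable {ι κ ρ α E : Type*} [MeasurableSpace α]

/-- The point of `ρ → α` with one coordinate `z.1` and the other coordinates taken from the tuples
`z.2.1` and `z.2.2`, placed according to `e`. -/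
def piGlue (e : Option (ι ⊕ κ) ≃ ρ) : α × (ι → α) × (κ → α) ≃ᵐ (ρ → α) where
  toFun z j := (e.symm j).elim z.1 (Sum.elim z.2.1 z.2.2)
  invFun x := (x (e none), fun i ↦ x (e (some (.inl i))), fun k ↦ x (e (some (.inr k))))
  left_inv z := by simp
  right_inv x := by
    funext j
    obtain ⟨_ | i | k, rfl⟩ := e.surjective j <;> simp
  measurable_toFun := by
    refine measurable_pi_lambda _ fun j ↦ ?_
    obtain ⟨_ | i | k, rfl⟩ := e.surjective j <;>
    · simp only [Equiv.coe_fn_mk, Equiv.symm_apply_apply, Option.elim, Sum.elim_inl, Sum.elim_inr]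
      fun_prop
  measurable_invFun := by
    simp only [Equiv.coe_fn_symm_mk]
    fun_prop

lemma piGlue_apply (e : Option (ι ⊕ κ) ≃ ρ) (z : α × (ι → α) × (κ → α)) (j : Option (ι ⊕ κ)) :
    piGlue e z (e j) = j.elim z.1 (Sum.elim z.2.1 z.2.2) := by
  simp [piGlue]

lemma piGlue_preimage_univ_pi (e : Option (ι ⊕ κ) ≃ ρ) (s : ρ → Set α) :
    piGlue e ⁻¹' Set.univ.pi s = s (e none) ×ˢ
      (Set.univ.pi fun i ↦ s (e (some (.inl i)))) ×ˢ Set.univ.pi fun k ↦ s (e (some (.inr k))) := by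
  ext z
  simp [← e.forall_congr_right, Option.forall, Sum.forall, piGlue_apply]

variable [Fintype ι] [Fintype κ] (μ : Measure α) [SigmaFinite μ]

lemma measurePreserving_piGlue [Fintype ρ] (e : Option (ι ⊕ κ) ≃ ρ) :
    MeasurePreserving (piGlue e)
      (μ.prod ((Measure.pi fun _ : ι ↦ μ).prod (Measure.pi fun _ : κ ↦ μ)))
      (Measure.pi fun _ : ρ ↦ μ) := by
  refine ⟨(piGlue e).measurable, (Measure.pi_eq fun s _ ↦ ?_).symm⟩
  rw [(piGlue e).map_apply, piGlue_preimage_univ_pi, Measure.prod_prod, Measure.prod_prod,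
    Measure.pi_pi, Measure.pi_pi, ← e.prod_comp, Fintype.prod_option, Fintype.prod_sum_type]

variable {μ}

lemma measure_piGlue_slice_le (e : Option (ι ⊕ κ) ≃ ρ) {I : ρ → Set α} {v : ℝ≥0∞}
    (hv : ∀ j, μ (I j) ≤ v) (t : α) :
    ((Measure.pi fun _ : ι ↦ μ).prod (Measure.pi fun _ : κ ↦ μ))
      {z | piGlue e (t, z) ∈ Set.univ.pi I} ≤ v ^ (Fintype.card ι + Fintype.card κ) := by
  have hsub : {z | piGlue e (t, z) ∈ Set.univ.pi I} ⊆
      (Set.univ.pi fun i ↦ I (e (some (.inl i)))) ×ˢ Set.univ.pi fun k ↦ I (e (some (.inr k))) :=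
    fun z hz ↦ ((piGlue_preimage_univ_pi e I).subset hz).2
  refine (measure_mono hsub).trans ?_
  rw [Measure.prod_prod, Measure.pi_pi, Measure.pi_pi, pow_add]
  exact mul_le_mul' (Finset.prod_le_pow_card _ _ _ fun i _ ↦ hv _)
    (Finset.prod_le_pow_card _ _ _ fun k _ ↦ hv _)

lemma ae_eLpNorm_piGlue_slice_le [Fintype ρ] [NormedAddCommGroup E] (e : Option (ι ⊕ κ) ≃ ρ)
    {f : (ρ → α) → E} {M : ℝ} {I : ρ → Set α} {v : ℝ≥0∞} (hv : ∀ j, μ (I j) ≤ v)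
    (hM : ∀ᵐ x ∂Measure.pi fun _ ↦ μ, ‖f x‖ ≤ M)
    (hI : ∀ᵐ x ∂Measure.pi fun _ ↦ μ, x ∉ Set.univ.pi I → f x = 0) (p : ℝ≥0∞) :
    ∀ᵐ t ∂μ, eLpNorm (fun z ↦ f (piGlue e (t, z))) p
        ((Measure.pi fun _ : ι ↦ μ).prod (Measure.pi fun _ : κ ↦ μ)) ≤
      ‖M‖ₑ * (v ^ (Fintype.card ι + Fintype.card κ)) ^ (1 / p.toReal) := by
  have hglue := (measurePreserving_piGlue μ e).quasiMeasurePreserving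
  filter_upwards [Measure.ae_ae_of_ae_prod (hglue.ae hM), Measure.ae_ae_of_ae_prod (hglue.ae hI)]
    with t hMt hIt
  refine (eLpNorm_le_of_ae_bound_of_ae_eq_zero hMt hIt p).trans ?_
  gcongr
  exact measure_piGlue_slice_le e hv t

end PiGlue

section Orthant

/-- Lebesgue measure on `ℝ₊`, seen as a measure on `ℝ`; `μpos n` is its `n`-fold product. -/
abbrev halfLine : Measure ℝ := volume.restrict (Set.Ici 0)

lemma μpos_eq_pi_s9 (n : ℕ) : μpos n = Measure.pi fun _ ↦ halfLine := by
  have horth : posOrthant n = Set.univ.pi fun _ ↦ Set.Ici 0 := by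
    ext x
    simp only [posOrthant, Set.mem_ofPred_eq, Set.mem_univ_pi, Set.mem_Ici]
  rw [μpos, horth, volume_pi, Measure.restrict_pi_pi]

instance inst_s9 (n : ℕ) : SigmaFinite (μpos n) := by
  rw [μpos_eq_pi_s9]
  infer_instance

instance (n : ℕ) : (ae (μpos n)).NeBot := by
  rw [ae_neBot, μpos_eq_pi_s9, ← Measure.measure_univ_ne_zero, Measure.pi_univ]
  simp

lemma measurePreserving_piGlue_μpos {a b k : ℕ} (e : Option (Fin a ⊕ Fin b) ≃ Fin k) :
    MeasurePreserving (piGlue e) (halfLine.prod ((μpos a).prod (μpos b))) (μpos k) := by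
  simp only [μpos_eq_pi_s9]
  exact measurePreserving_piGlue halfLine e

lemma L2norm_eq_toReal_eLpNorm {n : ℕ} {f : (Fin n → ℝ) → ℂ}
    (hf : AEStronglyMeasurable f (μpos n)) : L2norm n f = (eLpNorm f 2 (μpos n)).toReal := by
  rw [toReal_eLpNorm hf, lpNorm_eq_integral_norm_rpow_toReal two_ne_zero ENNReal.ofNat_ne_top hf]
  simp [L2norm, Real.sqrt_eq_rpow]

lemma halfLine_Icc_le (a c : ℝ) : halfLine (Set.Icc a (a + c)) ≤ ENNReal.ofReal c := by
  simpa using Measure.restrict_apply_le (μ := volume) (Set.Ici 0) (Set.Icc a (a + c))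

lemma volume_univ_pi_Icc_add {m : ℕ} (a : Fin m → ℝ) (c : ℝ) :
    volume (Set.univ.pi fun i ↦ Set.Icc (a i) (a i + c)) = ENNReal.ofReal c ^ m := by
  simp [Real.volume_Icc_pi]

lemma pow_rpow_half_eq (x : ℝ≥0∞) (k : ℕ) :
    (x ^ k) ^ (1 / 2 : ℝ) = (x ^ (k + 1)) ^ ((((k + 1 : ℕ) : ℝ) - 1) / (2 * (k + 1 : ℕ))) := by
  simp only [← ENNReal.rpow_natCast, ← ENNReal.rpow_mul]
  push_cast
  congr 1
  field_simp
  ring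

lemma IsCube.ae_eLpNorm_slice_le {E : Type*} [NormedAddCommGroup E] {a b m : ℕ}
    {S : Set (Fin m → ℝ)} (hS : IsCube m S) (e : Option (Fin a ⊕ Fin b) ≃ Fin m)
    {f : (Fin m → ℝ) → E} {M : ℝ} (hM : ∀ᵐ x ∂μpos m, ‖f x‖ ≤ M)
    (hfS : ∀ᵐ x ∂μpos m, x ∉ S → f x = 0) :
    ∀ᵐ t ∂halfLine, eLpNorm (fun z ↦ f (piGlue e (t, z))) 2 ((μpos a).prod (μpos b)) ≤
      ‖M‖ₑ * volume S ^ (((m : ℝ) - 1) / (2 * m)) := by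
  obtain ⟨x, c, rfl⟩ := hS
  obtain rfl : a + b + 1 = m := by simpa using Fintype.card_congr e
  simp only [μpos_eq_pi_s9] at hM hfS ⊢
  simpa only [volume_univ_pi_Icc_add, ← pow_rpow_half_eq, Fintype.card_fin, ENNReal.toReal_ofNat]
    using ae_eLpNorm_piGlue_slice_le e (fun j ↦ halfLine_Icc_le (x j) c) hM hfS 2

lemma IsCube.rpow_volume_ne_top {m : ℕ} {S : Set (Fin m → ℝ)} (hS : IsCube m S) (hm : 1 ≤ m) :
    volume S ^ (((m : ℝ) - 1) / (2 * m)) ≠ ⊤ := by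
  obtain ⟨x, c, rfl⟩ := hS
  have hm' : (1 : ℝ) ≤ m := mod_cast hm
  rw [volume_univ_pi_Icc_add]
  exact ENNReal.rpow_ne_top_of_nonneg (div_nonneg (by linarith) (by linarith)) (by finiteness)

end Orthant

section FinSplit

/-- The ordering of `a + 1 + b` coordinates in which the block `Fin a` comes first, then the
distinguished coordinate `none`, then the block `Fin b`. -/
def finSplit {a b k : ℕ} (h : a + 1 + b = k) : Option (Fin a ⊕ Fin b) ≃ Fin k :=
  .ofBijective (fun x ↦ x.elim ⟨a, by omega⟩
      (Sum.elim (fun i ↦ ⟨i, by omega⟩) fun i ↦ ⟨a + 1 + i, by omega⟩)) <| by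
    refine (Fintype.bijective_iff_injective_and_card _).2 ⟨?_, ?_⟩
    · rintro (_ | i | i) (_ | j | j) hij <;> grind
    · simp only [Fintype.card_option, Fintype.card_sum, Fintype.card_fin]
      omega

/-- The variant of `finSplit` with the last block reversed. It orders the arguments
`t₁,…,t_{m-p}, t_{m-p+1}, s_{p-1},…,s₁` of the left factor of a star contraction. -/
def finSplitRev {a b k : ℕ} (h : a + 1 + b = k) : Option (Fin a ⊕ Fin b) ≃ Fin k :=
  (Equiv.optionCongr ((Equiv.refl _).sumCongr Fin.revPerm)).trans (finSplit h)

/-- The variant of `finSplit` with the two blocks interchanged. It orders the arguments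
`s₁,…,s_{p-1}, t_{m-p+1}, t_{m-p+2},…,t_{m+n-2p+1}` of the right factor of a star contraction. -/
def finSplitSwap {a b k : ℕ} (h : b + 1 + a = k) : Option (Fin a ⊕ Fin b) ≃ Fin k :=
  (Equiv.optionCongr (Equiv.sumComm _ _)).trans (finSplit h)

variable {a b k : ℕ}

lemma finSplit_none (h : a + 1 + b = k) : (finSplit h none : ℕ) = a := rfl

lemma finSplit_inl (h : a + 1 + b = k) (i : Fin a) : (finSplit h (some (.inl i)) : ℕ) = i := rfl

lemma finSplit_inr (h : a + 1 + b = k) (i : Fin b) :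
    (finSplit h (some (.inr i)) : ℕ) = a + 1 + i := rfl

lemma finSplitRev_none (h : a + 1 + b = k) : (finSplitRev h none : ℕ) = a := rfl

lemma finSplitRev_inl (h : a + 1 + b = k) (i : Fin a) :
    (finSplitRev h (some (.inl i)) : ℕ) = i := rfl

lemma finSplitRev_inr (h : a + 1 + b = k) (i : Fin b) :
    (finSplitRev h (some (.inr i)) : ℕ) = k - 1 - i := by
  change a + 1 + (i.rev : ℕ) = k - 1 - i
  rw [Fin.val_rev]
  omega

lemma finSplitSwap_none (h : b + 1 + a = k) : (finSplitSwap h none : ℕ) = b := rfl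

lemma finSplitSwap_inl (h : b + 1 + a = k) (i : Fin a) :
    (finSplitSwap h (some (.inl i)) : ℕ) = b + 1 + i := rfl

lemma finSplitSwap_inr (h : b + 1 + a = k) (i : Fin b) :
    (finSplitSwap h (some (.inr i)) : ℕ) = i := rfl

end FinSplit

section StarContraction

lemma pad_of_eq_val {k : ℕ} {t : Fin k → ℝ} {i : ℕ} (j : Fin k) (h : i = j) : pad t i = t j := by
  simp [pad, h]

variable {m n p : ℕ} {f : (Fin m → ℝ) → ℂ} {g : (Fin n → ℝ) → ℂ}

section

variable (hm : m - p + 1 + (p - 1) = m) (hn : p - 1 + 1 + (n - p) = n)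

lemma starC_comp_piGlue (hmn : m - p + 1 + (n - p) = m + n + 1 - 2 * p) :
    starC m n p f g ∘ piGlue (finSplit hmn) = partialContraction (μpos (p - 1))
      (f ∘ piGlue (finSplitRev hm)) (g ∘ piGlue (finSplitSwap hn)) := by
  funext z
  refine integral_congr_ae (.of_forall fun s ↦ congrArg₂ (f · * g ·) ?_ ?_) <;> funext j
  · obtain ⟨_ | i | i, rfl⟩ := (finSplitRev hm).surjective j <;> rw [piGlue_apply]
    · rw [finSplitRev_none, if_pos (by omega), pad_of_eq_val (finSplit hmn none)
        (by rw [finSplit_none]), piGlue_apply]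
      rfl
    · rw [finSplitRev_inl, if_pos (by omega), pad_of_eq_val (finSplit hmn (some (.inl i)))
        (by rw [finSplit_inl]), piGlue_apply]
      rfl
    · rw [finSplitRev_inr, if_neg (by omega), pad_of_eq_val i (by omega)]
      rfl
  · obtain ⟨_ | i | i, rfl⟩ := (finSplitSwap hn).surjective j <;> rw [piGlue_apply]
    · rw [finSplitSwap_none, if_neg (by omega), pad_of_eq_val (finSplit hmn none)
        (by rw [finSplit_none]; omega), piGlue_apply]
      rfl
    · rw [finSplitSwap_inl, if_neg (by omega), pad_of_eq_val (finSplit hmn (some (.inr i)))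
        (by rw [finSplit_inr]; omega), piGlue_apply]
      rfl
    · rw [finSplitSwap_inr, if_pos (by omega), pad_of_eq_val i rfl]
      rfl

lemma eLpNorm_starC_eq (P : ℝ≥0∞) :
    eLpNorm (starC m n p f g) P (μpos (m + n + 1 - 2 * p)) =
      eLpNorm (partialContraction (μpos (p - 1)) (f ∘ piGlue (finSplitRev hm))
        (g ∘ piGlue (finSplitSwap hn))) P
        (halfLine.prod ((μpos (m - p)).prod (μpos (n - p)))) := by
  have hmn : m - p + 1 + (n - p) = m + n + 1 - 2 * p := by omega
  rw [← starC_comp_piGlue hm hn hmn,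
    ← (piGlue (finSplit hmn)).measurableEmbedding.eLpNorm_map_measure,
    (measurePreserving_piGlue_μpos (finSplit hmn)).map_eq]

end

variable (hp : 1 ≤ p) (hpm : p ≤ m) (hpn : p ≤ n)
include hp hpm hpn

lemma aestronglyMeasurable_starC (hf : AEStronglyMeasurable f (μpos m))
    (hg : AEStronglyMeasurable g (μpos n)) :
    AEStronglyMeasurable (starC m n p f g) (μpos (m + n + 1 - 2 * p)) := by
  have hmn : m - p + 1 + (n - p) = m + n + 1 - 2 * p := by omega
  rw [← (measurePreserving_piGlue_μpos (finSplit hmn)).aestronglyMeasurable_comp_iff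
    (piGlue _).measurableEmbedding, starC_comp_piGlue (by omega) (by omega) hmn]
  exact aestronglyMeasurable_partialContraction
    (hf.comp_measurePreserving (measurePreserving_piGlue_μpos _))
    (hg.comp_measurePreserving (measurePreserving_piGlue_μpos _))

lemma eLpNorm_starC_le_left {M : ℝ} {S : Set (Fin m → ℝ)}
    (hf : AEStronglyMeasurable f (μpos m)) (hg : AEStronglyMeasurable g (μpos n))
    (hS : IsCube m S) (hM : ∀ᵐ x ∂μpos m, ‖f x‖ ≤ M) (hfS : ∀ᵐ x ∂μpos m, x ∉ S → f x = 0) :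
    eLpNorm (starC m n p f g) 2 (μpos (m + n + 1 - 2 * p)) ≤
      ‖M‖ₑ * volume S ^ (((m : ℝ) - 1) / (2 * m)) * eLpNorm g 2 (μpos n) := by
  have hm : m - p + 1 + (p - 1) = m := by omega
  have hn : p - 1 + 1 + (n - p) = n := by omega
  have hFm := measurePreserving_piGlue_μpos (finSplitRev hm)
  have hGm := measurePreserving_piGlue_μpos (finSplitSwap hn)
  rw [eLpNorm_starC_eq hm hn, ← eLpNorm_comp_measurePreserving hg hGm]
  exact eLpNorm_partialContraction_le_left (hf.comp_measurePreserving hFm)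
    (hg.comp_measurePreserving hGm) (hS.ae_eLpNorm_slice_le _ hM hfS)

lemma eLpNorm_starC_le_right {M : ℝ} {S : Set (Fin n → ℝ)}
    (hf : AEStronglyMeasurable f (μpos m)) (hg : AEStronglyMeasurable g (μpos n))
    (hS : IsCube n S) (hM : ∀ᵐ x ∂μpos n, ‖g x‖ ≤ M) (hgS : ∀ᵐ x ∂μpos n, x ∉ S → g x = 0) :
    eLpNorm (starC m n p f g) 2 (μpos (m + n + 1 - 2 * p)) ≤
      eLpNorm f 2 (μpos m) * (‖M‖ₑ * volume S ^ (((n : ℝ) - 1) / (2 * n))) := by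
  have hm : m - p + 1 + (p - 1) = m := by omega
  have hn : p - 1 + 1 + (n - p) = n := by omega
  have hFm := measurePreserving_piGlue_μpos (finSplitRev hm)
  have hGm := measurePreserving_piGlue_μpos (finSplitSwap hn)
  rw [eLpNorm_starC_eq hm hn, ← eLpNorm_comp_measurePreserving hf hFm]
  exact eLpNorm_partialContraction_le_right (hf.comp_measurePreserving hFm)
    (hg.comp_measurePreserving hGm) (hS.ae_eLpNorm_slice_le _ hM hgS)

end StarContraction

theorem star_contraction_norm_bound_general (m n : ℕ)
    (f : (Fin m → ℝ) → ℂ) (g : (Fin n → ℝ) → ℂ)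
    (hf : MemLp f 2 (μpos m)) (hg : MemLp g 2 (μpos n)) (Mf Mg : ℝ)
    (hbf : ∀ᵐ t ∂(μpos m), ‖f t‖ ≤ Mf) (hbg : ∀ᵐ t ∂(μpos n), ‖g t‖ ≤ Mg)
    (Sf : Set (Fin m → ℝ)) (Sg : Set (Fin n → ℝ)) (hSf : IsCube m Sf) (hSg : IsCube n Sg)
    (hsf : ∀ᵐ t ∂(μpos m), t ∉ Sf → f t = 0) (hsg : ∀ᵐ t ∂(μpos n), t ∉ Sg → g t = 0)
    (r : ℕ) (hr : 1 ≤ r) (hrm : r ≤ m) (hrn : r ≤ n) :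
    MemLp (starC m n r f g) 2 (μpos (m + n + 1 - 2 * r)) ∧
    L2norm (m + n + 1 - 2 * r) (starC m n r f g) ≤
      Real.sqrt (Mf * Mg * ((volume Sf).toReal ^ (((m : ℝ) - 1) / (2 * m)) *
        (volume Sg).toReal ^ (((n : ℝ) - 1) / (2 * n))) * L2norm m f * L2norm n g) := by
  have hleft := eLpNorm_starC_le_left hr hrm hrn hf.1 hg.1 hSf hbf hsf
  have hright := eLpNorm_starC_le_right hr hrm hrn hf.1 hg.1 hSg hbg hsg
  have hleft_ne_top := ENNReal.mul_ne_top (ENNReal.mul_ne_top (enorm_ne_top (x := Mf))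
    (hSf.rpow_volume_ne_top (hr.trans hrm))) hg.eLpNorm_ne_top
  have hright_ne_top := ENNReal.mul_ne_top hf.eLpNorm_ne_top (ENNReal.mul_ne_top
    (enorm_ne_top (x := Mg)) (hSg.rpow_volume_ne_top (hr.trans hrn)))
  have hmeas := aestronglyMeasurable_starC hr hrm hrn hf.1 hg.1
  refine ⟨⟨hmeas, hleft.trans_lt hleft_ne_top.lt_top⟩, Real.le_sqrt_of_sq_le ?_⟩
  have hMf : 0 ≤ Mf := hbf.exists.elim fun t ht ↦ (norm_nonneg _).trans ht
  have hMg : 0 ≤ Mg := hbg.exists.elim fun t ht ↦ (norm_nonneg _).trans ht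
  rw [L2norm_eq_toReal_eLpNorm hmeas, L2norm_eq_toReal_eLpNorm hf.1,
    L2norm_eq_toReal_eLpNorm hg.1, sq]
  refine (mul_le_mul (ENNReal.toReal_mono hleft_ne_top hleft)
    (ENNReal.toReal_mono hright_ne_top hright) ENNReal.toReal_nonneg
    ENNReal.toReal_nonneg).trans_eq ?_
  simp only [ENNReal.toReal_mul, toReal_enorm, Real.norm_of_nonneg hMf, Real.norm_of_nonneg hMg,
    ENNReal.toReal_rpow]
  ring

/-- Cauchy–Schwarz type bound for star contractions of bounded,
boundedly supported kernels. -/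
theorem star_contraction_norm_bound (q : ℕ) (hq2 : 2 ≤ q)
    (f g : (Fin q → ℝ) → ℂ)
    (hf : MeasureTheory.MemLp f 2 (μpos q)) (hg : MeasureTheory.MemLp g 2 (μpos q))
    (Mf Mg : ℝ)
    (hbf : ∀ᵐ t ∂(μpos q), ‖f t‖ ≤ Mf) (hbg : ∀ᵐ t ∂(μpos q), ‖g t‖ ≤ Mg)
    (Sf Sg : Set (Fin q → ℝ))
    (hSf : IsCube q Sf) (hSf' : Sf ⊆ posOrthant q)
    (hSg : IsCube q Sg) (hSg' : Sg ⊆ posOrthant q)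
    (hsf : ∀ᵐ t ∂(μpos q), t ∉ Sf → f t = 0) (hsg : ∀ᵐ t ∂(μpos q), t ∉ Sg → g t = 0)
    (r : ℕ) (hr1 : 1 ≤ r) (hrq : r ≤ q) :
    MeasureTheory.MemLp (starC q q r f g) 2 (μpos (q + q + 1 - 2 * r)) ∧
    L2norm (q + q + 1 - 2 * r) (starC q q r f g) ≤
      Real.sqrt (Mf * Mg *
        ((MeasureTheory.volume Sf).toReal * (MeasureTheory.volume Sg).toReal)
          ^ (((q : ℝ) - 1) / (2 * (q : ℝ)))
        * L2norm q f * L2norm q g) := by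
  rw [Real.mul_rpow ENNReal.toReal_nonneg ENNReal.toReal_nonneg]
  exact star_contraction_norm_bound_general q q f g hf hg Mf Mg hbf hbg Sf Sg hSf hSg hsf hsg r
    hr1 hrq hrq

end
end
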